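/- arXiv:2105.12966 — 2 statements merged into one kernel-verified Lean document; each statement's English description precedes it below -/
import Mathlib

section
/- Let σ1, σ2 : ℂ be such that G(σ1), G(σ2), Wᵀ * G(σ1) * V and Wᵀ * G(σ2) * V are invertible. If x1(σ1) and x1(σ2) lie in the column span of V, then the reduced second-order input vector is the projection of the full one: B̂₂(σ1, σ2) = Wᵀ *ᵥ B₂(σ1, σ2), i.e., Q_r *ᵥ (x̂1(σ1) ⊗ x̂1(σ2)) + (1/2 : ℂ) • (N_r *ᵥ (x̂1(σ1) + x̂1(σ2))) = Wᵀ *ᵥ (Q *ᵥ ((x1 σ1) ⊗ (x1 σ2)) + (1/2 : ℂ) • (N *ᵥ (x1 σ1 + x1 σ2))). -/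
open Matrix
open scoped Kronecker

noncomputable section

/-- Kronecker product of vectors: `(u ⊗ v) (l, j) = u l * v j`. -/
def vkron {n : ℕ} (u v : Fin n → ℂ) : Fin n × Fin n → ℂ :=
  fun p => u p.1 * v p.2

/-- The matrix pencil `G(s) = s • E - A`. -/
def Gm {n : ℕ} (E A : Matrix (Fin n) (Fin n) ℂ) (s : ℂ) : Matrix (Fin n) (Fin n) ℂ :=
  s • E - A

/-- Primal state of the first subsystem: `x1(s) = G(s)⁻¹ *ᵥ B`. -/
def x1 {n : ℕ} (E A : Matrix (Fin n) (Fin n) ℂ) (B : Fin n → ℂ) (s : ℂ) : Fin n → ℂ :=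
  (Gm E A s)⁻¹ *ᵥ B

/-- First-order transfer function `H1(s) = C ⬝ᵥ x1(s)`. -/
def H1 {n : ℕ} (E A : Matrix (Fin n) (Fin n) ℂ) (B C : Fin n → ℂ) (s : ℂ) : ℂ :=
  C ⬝ᵥ x1 E A B s

/-- Second-order input term `B₂(s1, s2)`. -/
def B2 {n : ℕ} (E A N : Matrix (Fin n) (Fin n) ℂ) (Q : Matrix (Fin n) (Fin n × Fin n) ℂ)
    (B : Fin n → ℂ) (s1 s2 : ℂ) : Fin n → ℂ :=
  Q *ᵥ vkron (x1 E A B s1) (x1 E A B s2) + (1/2 : ℂ) • (N *ᵥ (x1 E A B s1 + x1 E A B s2))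

/-- Primal state of the second subsystem: `x2(s1, s2) = G(s1+s2)⁻¹ *ᵥ B₂(s1, s2)`. -/
def x2 {n : ℕ} (E A N : Matrix (Fin n) (Fin n) ℂ) (Q : Matrix (Fin n) (Fin n × Fin n) ℂ)
    (B : Fin n → ℂ) (s1 s2 : ℂ) : Fin n → ℂ :=
  (Gm E A (s1 + s2))⁻¹ *ᵥ B2 E A N Q B s1 s2

/-- Second-order (symmetric) transfer function `H2(s1, s2) = C ⬝ᵥ x2(s1, s2)`. -/
def H2 {n : ℕ} (E A N : Matrix (Fin n) (Fin n) ℂ) (Q : Matrix (Fin n) (Fin n × Fin n) ℂ)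
    (B C : Fin n → ℂ) (s1 s2 : ℂ) : ℂ :=
  C ⬝ᵥ x2 E A N Q B s1 s2

/-- Dual state of the first subsystem: `y1(s) = (G(s)ᵀ)⁻¹ *ᵥ C`. -/
def y1 {n : ℕ} (E A : Matrix (Fin n) (Fin n) ℂ) (C : Fin n → ℂ) (s : ℂ) : Fin n → ℂ :=
  ((Gm E A s)ᵀ)⁻¹ *ᵥ C

/-- Mode-2 matricization: `Q⁽²⁾ j (l, i) = Q i (l, j)`. -/
def mode2 {n : ℕ} (Q : Matrix (Fin n) (Fin n × Fin n) ℂ) : Matrix (Fin n) (Fin n × Fin n) ℂ :=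
  fun j p => Q p.2 (p.1, j)

/-- Dual output term `C₂(s1, s2)`. -/
def C2 {n : ℕ} (E A N : Matrix (Fin n) (Fin n) ℂ) (Q : Matrix (Fin n) (Fin n × Fin n) ℂ)
    (B C : Fin n → ℂ) (s1 s2 : ℂ) : Fin n → ℂ :=
  mode2 Q *ᵥ vkron (x1 E A B s2) (y1 E A C (s1 + s2)) +
    (1/2 : ℂ) • (Nᵀ *ᵥ y1 E A C (s1 + s2))

/-- Dual state of the second subsystem: `y2(s1, s2) = (G(s1)ᵀ)⁻¹ *ᵥ C₂(s1, s2)`. -/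
def y2 {n : ℕ} (E A N : Matrix (Fin n) (Fin n) ℂ) (Q : Matrix (Fin n) (Fin n × Fin n) ℂ)
    (B C : Fin n → ℂ) (s1 s2 : ℂ) : Fin n → ℂ :=
  ((Gm E A s1)ᵀ)⁻¹ *ᵥ C2 E A N Q B C s1 s2

/-- `Q` is symmetric: `Q *ᵥ (u ⊗ v) = Q *ᵥ (v ⊗ u)` for all `u, v`. -/
def QSymm {n : ℕ} (Q : Matrix (Fin n) (Fin n × Fin n) ℂ) : Prop :=
  ∀ u v : Fin n → ℂ, Q *ᵥ vkron u v = Q *ᵥ vkron v u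

/-- Euclidean (ℓ²) norm of a vector in `Fin n → ℂ`. -/
def vnorm {n : ℕ} (v : Fin n → ℂ) : ℝ := ‖(WithLp.equiv 2 (Fin n → ℂ)).symm v‖

/-- ℓ²-induced operator norm of a square complex matrix. -/
def mnorm {n : ℕ} (M : Matrix (Fin n) (Fin n) ℂ) : ℝ := ‖Matrix.toEuclideanCLM (𝕜 := ℂ) M‖

/-!
If `x1 s` lies in the column span of `V`, the reduced state `x̂1 s` is its coordinate vector: the
full equation `G(s) (V c) = B`, multiplied by `Wᵀ`, is the reduced equation for `c`. The reduced
input term evaluated at coordinate vectors is then `Wᵀ` applied to the full input term at the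
vectors they represent, because `(V ⊗ V) (c ⊗ d) = V c ⊗ V d`.
-/

theorem inv_projected_mulVec_of_mulVec_eq {R k m n : Type*} [CommRing R] [Fintype k] [Fintype m]
    [Fintype n] [DecidableEq m] {L : Matrix m k R} {G : Matrix k n R} {V : Matrix n m R}
    {b : k → R} {c : m → R} (hLGV : IsUnit (L * G * V)) (hc : G *ᵥ (V *ᵥ c) = b) :
    (L * G * V)⁻¹ *ᵥ (L *ᵥ b) = c := by
  have hproj : L *ᵥ b = (L * G * V) *ᵥ c := by
    simp only [← hc, mulVec_mulVec, Matrix.mul_assoc]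
  rw [hproj, mulVec_mulVec, nonsing_inv_mul _ ((isUnit_iff_isUnit_det _).1 hLGV), one_mulVec]

-- `vec` stacks columns, which swaps the two factors.
theorem vkron_eq_vec_vecMulVec {n : ℕ} (u v : Fin n → ℂ) :
    vkron u v = vec (vecMulVec v u) :=
  funext fun _ => mul_comm _ _

theorem kronecker_mulVec_vkron {m n : ℕ} (U V : Matrix (Fin m) (Fin n) ℂ) (c d : Fin n → ℂ) :
    (U ⊗ₖ V) *ᵥ vkron c d = vkron (U *ᵥ c) (V *ᵥ d) := by
  simp only [vkron_eq_vec_vecMulVec, kronecker_mulVec_vec, mul_vecMulVec, vecMulVec_mul,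
    vecMul_transpose]

theorem projected_quadratic_add_bilinear {k l : Type*} [Fintype l] {n r : ℕ}
    (L : Matrix k l ℂ) (Q : Matrix l (Fin n × Fin n) ℂ) (N : Matrix l (Fin n) ℂ)
    (V : Matrix (Fin n) (Fin r) ℂ) (a : ℂ) (c d : Fin r → ℂ) :
    (L * Q * (V ⊗ₖ V)) *ᵥ vkron c d + a • ((L * N * V) *ᵥ (c + d)) =
      L *ᵥ (Q *ᵥ vkron (V *ᵥ c) (V *ᵥ d) + a • (N *ᵥ (V *ᵥ c + V *ᵥ d))) := by
  simp only [← kronecker_mulVec_vkron, ← mulVec_mulVec, mulVec_add, mulVec_smul]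

theorem Gm_mul_mul {n r : ℕ} (E A : Matrix (Fin n) (Fin n) ℂ)
    (L : Matrix (Fin r) (Fin n) ℂ) (V : Matrix (Fin n) (Fin r) ℂ) (s : ℂ) :
    Gm (L * E * V) (L * A * V) s = L * Gm E A s * V := by
  simp only [Gm, Matrix.mul_sub, Matrix.sub_mul, Matrix.mul_smul, Matrix.smul_mul]

section Projection

variable {n r : ℕ} {E A : Matrix (Fin n) (Fin n) ℂ} {B : Fin n → ℂ} {s : ℂ}

theorem Gm_mulVec_x1 (hG : IsUnit (Gm E A s)) : Gm E A s *ᵥ x1 E A B s = B := by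
  rw [x1, mulVec_mulVec, mul_nonsing_inv _ ((isUnit_iff_isUnit_det _).1 hG), one_mulVec]

theorem mulVec_x1_projected {L : Matrix (Fin r) (Fin n) ℂ} {V : Matrix (Fin n) (Fin r) ℂ}
    (hG : IsUnit (Gm E A s)) (hLGV : IsUnit (L * Gm E A s * V))
    (hx : ∃ c : Fin r → ℂ, x1 E A B s = V *ᵥ c) :
    V *ᵥ x1 (L * E * V) (L * A * V) (L *ᵥ B) s = x1 E A B s := by
  obtain ⟨c, hc⟩ := hx
  have hsolve : Gm E A s *ᵥ (V *ᵥ c) = B := hc ▸ Gm_mulVec_x1 hG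
  rw [hc, x1, Gm_mul_mul, inv_projected_mulVec_of_mulVec_eq hLGV hsolve]

end Projection

theorem reduced_B2_is_projection {n r : ℕ}
    (E A N : Matrix (Fin n) (Fin n) ℂ) (Q : Matrix (Fin n) (Fin n × Fin n) ℂ)
    (B : Fin n → ℂ) (V W : Matrix (Fin n) (Fin r) ℂ) (σ1 σ2 : ℂ)
    (hG1 : IsUnit (Gm E A σ1)) (hG2 : IsUnit (Gm E A σ2))
    (hGr1 : IsUnit (Wᵀ * Gm E A σ1 * V)) (hGr2 : IsUnit (Wᵀ * Gm E A σ2 * V))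
    (hx1 : ∃ c : Fin r → ℂ, x1 E A B σ1 = V *ᵥ c)
    (hx2 : ∃ c : Fin r → ℂ, x1 E A B σ2 = V *ᵥ c) :
    B2 (Wᵀ * E * V) (Wᵀ * A * V) (Wᵀ * N * V) (Wᵀ * Q * (V ⊗ₖ V)) (Wᵀ *ᵥ B) σ1 σ2 =
      Wᵀ *ᵥ B2 E A N Q B σ1 σ2 := by
  have hσ1 : V *ᵥ x1 (Wᵀ * E * V) (Wᵀ * A * V) (Wᵀ *ᵥ B) σ1 = x1 E A B σ1 :=
    mulVec_x1_projected hG1 hGr1 hx1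
  have hσ2 : V *ᵥ x1 (Wᵀ * E * V) (Wᵀ * A * V) (Wᵀ *ᵥ B) σ2 = x1 E A B σ2 :=
    mulVec_x1_projected hG2 hGr2 hx2
  rw [B2, B2, projected_quadratic_add_bilinear, hσ1, hσ2]
end
end

section
/- (Formula (13).) Assume Q is symmetric and let s1, s2 : ℂ be such that G(s1), G(s2) and G(s1+s2) are invertible. Then the partial derivative of the second-order transfer function with respect to its second variable satisfies deriv (fun s => H2(s1, s)) s2 = -(y1(s1+s2) ⬝ᵥ (E *ᵥ x2(s1, s2))) - (x1(s2) ⬝ᵥ (Eᵀ *ᵥ y2(s2, s1))). -/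
open Matrix
open scoped Kronecker

noncomputable section

/-!
Differentiating `G(t) x(t) = b(t)` gives `x' = G⁻¹ (b' - G' x)`. Applied to `x2(s1, ·)`, this splits
the derivative of `H2` into `-y1 ⬝ᵥ E x2` and `y1 ⬝ᵥ b'`, where `b' = ∂B2/∂s2` is linear in the
derivative `-G(s2)⁻¹ E x1` of `x1`. Moving this linear map, and then `G(s2)⁻¹`, to the other side of
the dot product turns the second term into the one with the dual state `y2`.
-/

section MatrixCalculus

variable {𝕜 m p : Type*} [NontriviallyNormedField 𝕜] [Fintype p] {s : 𝕜}

theorem hasDerivAt_dotProduct {u v : 𝕜 → p → 𝕜} {u' v' : p → 𝕜}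
    (hu : HasDerivAt u u' s) (hv : HasDerivAt v v' s) :
    HasDerivAt (fun t => u t ⬝ᵥ v t) (u' ⬝ᵥ v s + u s ⬝ᵥ v') s :=
  (HasDerivAt.fun_sum fun i _ => (hasDerivAt_pi.1 hu i).mul (hasDerivAt_pi.1 hv i)).congr_deriv
    Finset.sum_add_distrib

theorem hasDerivAt_const_dotProduct (c : p → 𝕜) {v : 𝕜 → p → 𝕜} {v' : p → 𝕜}
    (hv : HasDerivAt v v' s) : HasDerivAt (fun t => c ⬝ᵥ v t) (c ⬝ᵥ v') s := by
  simpa only [zero_dotProduct, zero_add] using hasDerivAt_dotProduct (hasDerivAt_const s c) hv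

theorem hasDerivAt_mulVec [Finite m] {M : 𝕜 → Matrix m p 𝕜} {M' : Matrix m p 𝕜}
    {v : 𝕜 → p → 𝕜} {v' : p → 𝕜} (hM : HasDerivAt M M' s) (hv : HasDerivAt v v' s) :
    HasDerivAt (fun t => M t *ᵥ v t) (M' *ᵥ v s + M s *ᵥ v') s := by
  have := Fintype.ofFinite m
  exact hasDerivAt_pi.2 fun i => hasDerivAt_dotProduct (hasDerivAt_pi.1 hM i) hv

theorem hasDerivAt_const_mulVec [Finite m] (M : Matrix m p 𝕜) {v : 𝕜 → p → 𝕜} {v' : p → 𝕜}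
    (hv : HasDerivAt v v' s) : HasDerivAt (fun t => M *ᵥ v t) (M *ᵥ v') s := by
  have := Fintype.ofFinite m
  exact hasDerivAt_pi.2 fun i => hasDerivAt_const_dotProduct (M i) hv

variable [DecidableEq p] [CompleteSpace 𝕜] {M : 𝕜 → Matrix p p 𝕜} {M' : Matrix p p 𝕜}

open scoped Matrix.Norms.Operator in
theorem hasDerivAt_matrix_inv (hM : HasDerivAt M M' s) (hs : IsUnit (M s)) :
    HasDerivAt (fun t => (M t)⁻¹) (-((M s)⁻¹ * M' * (M s)⁻¹)) s := by
  -- Instance search misses this: the entrywise uniformity is that of the operator norm only after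
  -- unfolding.
  have : HasSummableGeomSeries (Matrix p p 𝕜) :=
    @instHasSummableGeomSeriesOfCompleteSpace _ _ (inferInstanceAs (CompleteSpace (p → p → 𝕜)))
  obtain ⟨u, hu⟩ := hs
  have hinv := hasFDerivAt_ringInverse (𝕜 := 𝕜) u
  rw [hu] at hinv
  have hcomp := hinv.comp_hasDerivAt s hM
  simp only [nonsing_inv_eq_ringInverse, ← hu, Ring.inverse_unit]
  exact hcomp

theorem hasDerivAt_matrix_inv_mulVec {b : 𝕜 → p → 𝕜} {b' : p → 𝕜}
    (hM : HasDerivAt M M' s) (hs : IsUnit (M s)) (hb : HasDerivAt b b' s) :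
    HasDerivAt (fun t => (M t)⁻¹ *ᵥ b t)
      ((M s)⁻¹ *ᵥ (b' - M' *ᵥ ((M s)⁻¹ *ᵥ b s))) s := by
  refine (hasDerivAt_mulVec (hasDerivAt_matrix_inv hM hs) hb).congr_deriv ?_
  simp only [mulVec_sub, mulVec_mulVec, neg_mulVec, mul_assoc]
  abel

end MatrixCalculus

theorem dotProduct_transpose_inv_mulVec {m R : Type*} [Fintype m] [DecidableEq m] [CommRing R]
    (M : Matrix m m R) (v w : m → R) : v ⬝ᵥ (Mᵀ⁻¹ *ᵥ w) = w ⬝ᵥ (M⁻¹ *ᵥ v) := by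
  rw [← transpose_nonsing_inv, dotProduct_transpose_mulVec]

section QuadraticBilinear

variable {n : ℕ} (E A N : Matrix (Fin n) (Fin n) ℂ) (Q : Matrix (Fin n) (Fin n × Fin n) ℂ)
  (B C : Fin n → ℂ) {s s1 s2 : ℂ}

theorem dotProduct_mode2_mulVec_vkron (u v w : Fin n → ℂ) :
    w ⬝ᵥ (mode2 Q *ᵥ vkron u v) = v ⬝ᵥ (Q *ᵥ vkron u w) := by
  simp only [dotProduct, mulVec, mode2, vkron, Fintype.sum_prod_type_right, Finset.mul_sum]
  rw [Finset.sum_comm]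
  refine Finset.sum_congr rfl fun i _ => Finset.sum_congr rfl fun j _ =>
    Finset.sum_congr rfl fun l _ => ?_
  ring

theorem dotProduct_C2 (d : Fin n → ℂ) :
    d ⬝ᵥ C2 E A N Q B C s2 s1 =
      y1 E A C (s1 + s2) ⬝ᵥ (Q *ᵥ vkron (x1 E A B s1) d + (1/2 : ℂ) • (N *ᵥ d)) := by
  rw [C2, add_comm s2 s1, dotProduct_add, dotProduct_add, dotProduct_smul, dotProduct_smul,
    dotProduct_mode2_mulVec_vkron, dotProduct_transpose_mulVec]

theorem hasDerivAt_vkron_right (u : Fin n → ℂ) {v : ℂ → Fin n → ℂ} {v' : Fin n → ℂ}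
    (hv : HasDerivAt v v' s) : HasDerivAt (fun t => vkron u (v t)) (vkron u v') s :=
  hasDerivAt_pi.2 fun p => (hasDerivAt_pi.1 hv p.2).const_mul (u p.1)

theorem hasDerivAt_Gm {g : ℂ → ℂ} {g' : ℂ} (hg : HasDerivAt g g' s) :
    HasDerivAt (fun t => Gm E A (g t)) (g' • E) s :=
  hasDerivAt_pi.2 fun i => hasDerivAt_pi.2 fun j => (hg.mul_const (E i j)).sub_const (A i j)

theorem hasDerivAt_x1 (hG : IsUnit (Gm E A s)) :
    HasDerivAt (x1 E A B) (-((Gm E A s)⁻¹ *ᵥ (E *ᵥ x1 E A B s))) s := by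
  refine (hasDerivAt_matrix_inv_mulVec (hasDerivAt_Gm E A (hasDerivAt_id s)) hG
    (hasDerivAt_const s B)).congr_deriv ?_
  rw [one_smul, zero_sub, mulVec_neg, id, x1]

theorem hasDerivAt_B2_right {d : Fin n → ℂ} (hx1 : HasDerivAt (x1 E A B) d s2) :
    HasDerivAt (B2 E A N Q B s1)
      (Q *ᵥ vkron (x1 E A B s1) d + (1/2 : ℂ) • (N *ᵥ d)) s2 :=
  (hasDerivAt_const_mulVec Q (hasDerivAt_vkron_right _ hx1)).add
    ((hasDerivAt_const_mulVec N (hx1.const_add _)).fun_const_smul _)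

theorem hasDerivAt_x2_right {b' : Fin n → ℂ} (hB2 : HasDerivAt (B2 E A N Q B s1) b' s2)
    (hG : IsUnit (Gm E A (s1 + s2))) :
    HasDerivAt (x2 E A N Q B s1)
      ((Gm E A (s1 + s2))⁻¹ *ᵥ (b' - E *ᵥ x2 E A N Q B s1 s2)) s2 := by
  refine (hasDerivAt_matrix_inv_mulVec (hasDerivAt_Gm E A ((hasDerivAt_id s2).const_add s1)) hG
    hB2).congr_deriv ?_
  rw [one_smul, id, x2]

theorem y1_dotProduct (w : Fin n → ℂ) :
    y1 E A C s ⬝ᵥ w = C ⬝ᵥ ((Gm E A s)⁻¹ *ᵥ w) := by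
  rw [dotProduct_comm, y1, dotProduct_transpose_inv_mulVec]

theorem dotProduct_y2 (v : Fin n → ℂ) :
    v ⬝ᵥ y2 E A N Q B C s2 s1 = ((Gm E A s2)⁻¹ *ᵥ v) ⬝ᵥ C2 E A N Q B C s2 s1 := by
  rw [y2, dotProduct_transpose_inv_mulVec, dotProduct_comm]

end QuadraticBilinear

theorem H2_second_partial_formula_general {n : ℕ}
    (E A N : Matrix (Fin n) (Fin n) ℂ) (Q : Matrix (Fin n) (Fin n × Fin n) ℂ)
    (B C : Fin n → ℂ) (s1 s2 : ℂ)
    (_hG1 : IsUnit (Gm E A s1)) (hG2 : IsUnit (Gm E A s2))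
    (hG12 : IsUnit (Gm E A (s1 + s2))) :
    HasDerivAt (fun s => H2 E A N Q B C s1 s)
      (-(y1 E A C (s1 + s2) ⬝ᵥ (E *ᵥ x2 E A N Q B s1 s2)) -
        (x1 E A B s2 ⬝ᵥ (Eᵀ *ᵥ y2 E A N Q B C s2 s1))) s2 := by
  have hB2 := hasDerivAt_B2_right E A N Q B (s1 := s1) (hasDerivAt_x1 E A B hG2)
  have hH2 := hasDerivAt_const_dotProduct C (hasDerivAt_x2_right E A N Q B hB2 hG12)
  refine hH2.congr_deriv ?_
  rw [← y1_dotProduct, dotProduct_sub, ← dotProduct_C2, neg_dotProduct, ← dotProduct_y2,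
    dotProduct_transpose_mulVec, dotProduct_comm (y2 E A N Q B C s2 s1)]
  ring

theorem H2_second_partial_formula {n : ℕ}
    (E A N : Matrix (Fin n) (Fin n) ℂ) (Q : Matrix (Fin n) (Fin n × Fin n) ℂ)
    (B C : Fin n → ℂ) (s1 s2 : ℂ)
    (hQ : QSymm Q)
    (hG1 : IsUnit (Gm E A s1)) (hG2 : IsUnit (Gm E A s2))
    (hG12 : IsUnit (Gm E A (s1 + s2))) :
    deriv (fun s => H2 E A N Q B C s1 s) s2 =
      -(y1 E A C (s1 + s2) ⬝ᵥ (E *ᵥ x2 E A N Q B s1 s2)) -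
        (x1 E A B s2 ⬝ᵥ (Eᵀ *ᵥ y2 E A N Q B C s2 s1)) :=
  (H2_second_partial_formula_general E A N Q B C s1 s2 hG1 hG2 hG12).deriv
end
end
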